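/- Let F be a field and X any set. Every Lie subalgebra J of the free Lie algebra FreeLie_F(X) on X over F is itself a free Lie algebra; that is, there exist a set Y and an isomorphism of Lie algebras FreeLie_F(Y) ≅ J. -/

import Mathlib

/-!
Write `U` for the free associative algebra on `X`, into which the free Lie algebra embeds, and let
`K` be a Lie subalgebra of the free Lie algebra. Choose elements of `K` whose leading forms `f y` of
degree `n` are, for every `n`, a basis of the leading forms of `K` of degree `n` modulo the left
ideal `I n` of `U` generated by those of smaller degree.

The elements freely generate. Comparing components of degree `n` in a left relation
`∑ q y * f y = 0` shows that the `q y` have no constant term; then deleting a first letter from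
every word of the `q y` preserves the relation, so all `q y` vanish. Left independence passes from
the leading forms to the elements themselves, and it makes substitution of these elements for
letters injective on the free associative algebra.

The elements generate `K`. By induction on `n`, a leading form of `K` of degree `n` lying in `I n`
belongs to the left ideal generated by the leading forms of the subalgebra `K'` generated by the
chosen elements. A Lie subalgebra `J` of `L` is the intersection of `L` with the left ideal it
generates in the enveloping algebra, because the `L`-module induced from the trivial `J`-module
has a vector with annihilator exactly `J` in `L`. Hence `K` and `K'` have the same leading forms.
-/

namespace FreeLieSubalgebra

open Module
open GradedAlgebra (proj)

universe u v w

/-! ### The representation induced from the trivial representation of a subalgebra -/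

section InducedRepresentation

variable {R L ι κ : Type*} [CommRing R] [LieRing L] [LieAlgebra R L]

/-- The failure of a linear map `a : L → End V` to be a representation, as a bilinear map. -/
def defect {V : Type*} [AddCommGroup V] [Module R V] (a : L →ₗ[R] Module.End R V) :
    L →ₗ[R] L →ₗ[R] Module.End R V :=
  LinearMap.mk₂ R (fun x y => a x * a y - a y * a x - a ⁅x, y⁆)
    (fun x x' y => by simp only [map_add, add_lie]; noncomm_ring)
    (fun c x y => by simp only [map_smul, smul_lie, smul_mul_assoc, mul_smul_comm, smul_sub])
    (fun x y y' => by simp only [map_add, lie_add]; noncomm_ring)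
    (fun c x y => by simp only [map_smul, lie_smul, smul_mul_assoc, mul_smul_comm, smul_sub])

theorem defect_self {V : Type*} [AddCommGroup V] [Module R V] (a : L →ₗ[R] Module.End R V)
    (x : L) : defect a x x = 0 := by
  simp [defect]

theorem defect_swap {V : Type*} [AddCommGroup V] [Module R V] (a : L →ₗ[R] Module.End R V)
    (x y : L) : defect a y x = -defect a x y := by
  simp only [defect, LinearMap.mk₂_apply, ← lie_skew x y, map_neg]
  abel

theorem defect_cyclic {V : Type*} [AddCommGroup V] [Module R V] (a : L →ₗ[R] Module.End R V)
    (x y z : L) :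
    defect a x y * a z + defect a y z * a x + defect a z x * a y =
      a z * defect a x y + a x * defect a y z + a y * defect a z x +
        (defect a z ⁅x, y⁆ + defect a x ⁅y, z⁆ + defect a y ⁅z, x⁆) := by
  have jacobi : a ⁅x, ⁅y, z⁆⁆ + a ⁅y, ⁅z, x⁆⁆ + a ⁅z, ⁅x, y⁆⁆ = 0 := by
    rw [← map_add, ← map_add, lie_jacobi, map_zero]
  rw [← sub_eq_zero, ← jacobi]
  simp only [defect, LinearMap.mk₂_apply]
  noncomm_ring

/-- The top-degree part of the action of a basis vector on polynomials in the variables `ι`: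
multiplication by the variable for indices in `ι`, zero for indices in `κ`. -/
noncomputable def lead (R : Type*) [CommRing R] :
    ι ⊕ κ → (Multiset ι →₀ R) →ₗ[R] (Multiset ι →₀ R) :=
  Sum.elim (fun i => Finsupp.lmapDomain R R (i ::ₘ ·)) 0

/-- Polynomials of degree at most `n` in the variables `ι`, encoded as finitely supported functions
on the monomials, which are the multisets of variables. -/
abbrev polyDegreeLE (R ι : Type*) [CommRing R] (n : ℕ) : Submodule R (Multiset ι →₀ R) :=
  Finsupp.supported R R {m | m.card ≤ n}

theorem polyDegreeLE_mono {m n : ℕ} (h : m ≤ n) : polyDegreeLE R ι m ≤ polyDegreeLE R ι n :=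
  Finsupp.supported_mono fun _ hs => le_trans hs h

theorem lead_single_mem_polyDegreeLE (p : ι ⊕ κ) (m : Multiset ι) :
    lead R p (Finsupp.single m 1) ∈ polyDegreeLE R ι (m.card + 1) := by
  rcases p with i | _
  · simpa [lead] using Finsupp.single_mem_supported R (1 : R) (by simp)
  · simp [lead]

variable [LinearOrder ι]

/-- `Precedes k p` says that the basis vector `k` comes strictly before `p` in the ordering of
`ι ⊕ κ` in which all of `ι` comes before `κ`. -/
def Precedes (k : ι) : ι ⊕ κ → Prop :=
  Sum.elim (k < ·) fun _ => True

open Classical in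
/-- The action of the basis vector `b p` on the monomial `m`, by recursion on the degree. With `k`
the least variable of `m = k ::ₘ l` and `k` before `p`, it is `k • (p • l) + [p, k] • l`, where the
top-degree part `k p l` of `k • (p • l)` is written down directly; the guard on the degree of `m'`
always holds and is only there to make the recursion well-founded. -/
noncomputable def actMonomial (b : Basis (ι ⊕ κ) R L) (p : ι ⊕ κ) (m : Multiset ι) :
    Multiset ι →₀ R :=
  match h : m.sort with
  | [] => lead R p (Finsupp.single m 1)
  | k :: l =>
    if Precedes k p then
      lead R p (Finsupp.single m 1) +
        (actMonomial b p l - lead R p (Finsupp.single (l : Multiset ι) 1)).sum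
          (fun m' c => if m'.card < m.card then c • actMonomial b (.inl k) m' else 0) +
        (b.repr ⁅b p, b (.inl k)⁆).sum fun q c => c • actMonomial b q l
    else lead R p (Finsupp.single m 1)
termination_by m.card
decreasing_by
  all_goals first
    | assumption
    | rw [← m.length_sort (r := (· ≤ ·)), h]; simp

theorem actMonomial_of_forall_not_precedes (b : Basis (ι ⊕ κ) R L) {p : ι ⊕ κ} {m : Multiset ι}
    (h : ∀ k ∈ m, ¬Precedes k p) : actMonomial b p m = lead R p (Finsupp.single m 1) := by
  rw [actMonomial]
  split
  case h_1 => rfl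
  case h_2 k l hm =>
    have hk : k ∈ m := by rw [← Multiset.mem_sort (· ≤ ·), hm]; exact List.mem_cons_self
    exact if_neg (h k hk)

open Classical in
theorem actMonomial_cons_of_precedes (b : Basis (ι ⊕ κ) R L) {p : ι ⊕ κ} {k : ι} {l : Multiset ι}
    (hl : ∀ j ∈ l, k ≤ j) (hp : Precedes k p) :
    actMonomial b p (k ::ₘ l) =
      lead R p (Finsupp.single (k ::ₘ l) 1) +
        (actMonomial b p l - lead R p (Finsupp.single l 1)).sum
          (fun m' c => if m'.card ≤ l.card then c • actMonomial b (.inl k) m' else 0) +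
        (b.repr ⁅b p, b (.inl k)⁆).sum fun q c => c • actMonomial b q l := by
  have hsort := Multiset.sort_cons k l _ hl
  rw [actMonomial]
  split
  case h_1 h => simp [hsort] at h
  case h_2 k' l' h =>
    obtain ⟨rfl, rfl⟩ : k = k' ∧ l.sort = l' := by simpa [hsort] using h
    rw [if_pos hp, Multiset.sort_eq]
    simp only [Multiset.card_cons, Nat.lt_succ_iff]

theorem Precedes.of_le {i k : ι} {p : ι ⊕ κ} (hk : Precedes k p) (hik : i ≤ k) : Precedes i p := by
  rcases p with j | j
  · exact hik.trans_lt hk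
  · exact hk

theorem exists_cons_forall_le {m : Multiset ι} (hm : m ≠ 0) :
    ∃ k l, m = k ::ₘ l ∧ ∀ j ∈ l, k ≤ j := by
  obtain ⟨k, hk, hmin⟩ := m.exists_min_image id hm
  obtain ⟨l, rfl⟩ := Multiset.exists_cons_of_mem hk
  exact ⟨k, l, rfl, fun j hj => hmin j (Multiset.mem_cons_of_mem hj)⟩

theorem actMonomial_sub_lead_mem_polyDegreeLE (b : Basis (ι ⊕ κ) R L) (p : ι ⊕ κ) (m : Multiset ι) :
    actMonomial b p m - lead R p (Finsupp.single m 1) ∈ polyDegreeLE R ι m.card := by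
  induction hn : m.card using Nat.strong_induction_on generalizing p m with
  | _ n ih =>
  subst hn
  have lower (q : ι ⊕ κ) (m' : Multiset ι) (h : m'.card < m.card) :
      actMonomial b q m' ∈ polyDegreeLE R ι m.card := by
    rw [← sub_add_cancel (actMonomial b q m') (lead R q (Finsupp.single m' 1))]
    exact add_mem (polyDegreeLE_mono h.le (ih _ h q m' rfl))
      (polyDegreeLE_mono h (lead_single_mem_polyDegreeLE q m'))
  by_cases h : ∀ k ∈ m, ¬Precedes k p
  · rw [actMonomial_of_forall_not_precedes b h, sub_self]
    exact zero_mem _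
  obtain ⟨j, hj, hjp⟩ : ∃ j ∈ m, Precedes j p := by simpa using h
  obtain ⟨k, l, rfl, hl⟩ := exists_cons_forall_le (m := m) (by rintro rfl; simp at hj)
  have hp : Precedes k p := hjp.of_le ((Multiset.mem_cons.1 hj).elim ge_of_eq (hl j))
  rw [actMonomial_cons_of_precedes b hl hp, add_assoc, add_sub_cancel_left]
  refine add_mem (sum_mem fun m' _ => ?_) (sum_mem fun q _ => ?_)
  · beta_reduce
    split_ifs with h
    · exact Submodule.smul_mem _ _ (lower _ _ (by simpa [Nat.lt_succ_iff] using h))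
    · exact zero_mem _
  · exact Submodule.smul_mem _ _ (lower _ _ (by simp))

/-- The action of `L` on polynomials in the variables `ι` that, when the `b (.inr j)` span a Lie
subalgebra `J`, makes them the representation induced from the trivial representation of `J`. -/
noncomputable def act (b : Basis (ι ⊕ κ) R L) : L →ₗ[R] Module.End R (Multiset ι →₀ R) :=
  b.constr R fun p => Finsupp.linearCombination R (actMonomial b p)

theorem act_single (b : Basis (ι ⊕ κ) R L) (x : L) (m : Multiset ι) :
    act b x (Finsupp.single m 1) = (b.repr x).sum fun q c => c • actMonomial b q m := by
  simp [act, Basis.constr_apply, Finsupp.sum, LinearMap.sum_apply]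

theorem act_basis_single (b : Basis (ι ⊕ κ) R L) (p : ι ⊕ κ) (m : Multiset ι) :
    act b (b p) (Finsupp.single m 1) = actMonomial b p m := by
  simp [act]

theorem act_of_forall_not_precedes (b : Basis (ι ⊕ κ) R L) {p : ι ⊕ κ} {m : Multiset ι}
    (h : ∀ k ∈ m, ¬Precedes k p) :
    act b (b p) (Finsupp.single m 1) = lead R p (Finsupp.single m 1) := by
  rw [act_basis_single, actMonomial_of_forall_not_precedes b h]

theorem act_inl_of_forall_le (b : Basis (ι ⊕ κ) R L) {i : ι} {m : Multiset ι}
    (h : ∀ k ∈ m, i ≤ k) :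
    act b (b (.inl i)) (Finsupp.single m 1) = Finsupp.single (i ::ₘ m) 1 := by
  rw [act_of_forall_not_precedes b (p := .inl i) fun k hk => (h k hk).not_gt]
  simp [lead]

theorem act_sub_lead_mem_polyDegreeLE (b : Basis (ι ⊕ κ) R L) (p : ι ⊕ κ) (m : Multiset ι) :
    act b (b p) (Finsupp.single m 1) - lead R p (Finsupp.single m 1) ∈
      polyDegreeLE R ι m.card := by
  rw [act_basis_single]
  exact actMonomial_sub_lead_mem_polyDegreeLE b p m

theorem act_inl_lead (b : Basis (ι ⊕ κ) R L) {p : ι ⊕ κ} {k : ι} {l : Multiset ι}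
    (hl : ∀ j ∈ l, k ≤ j) (hp : Precedes k p) :
    act b (b (.inl k)) (lead R p (Finsupp.single l 1)) = lead R p (Finsupp.single (k ::ₘ l) 1) := by
  rcases p with i | j
  · have hil : ∀ j ∈ i ::ₘ l, k ≤ j := by simpa using ⟨hp.le, hl⟩
    simp [lead, act_inl_of_forall_le b hil, Multiset.cons_swap]
  · simp [lead]

theorem act_cons_of_precedes (b : Basis (ι ⊕ κ) R L) {p : ι ⊕ κ} {k : ι} {l : Multiset ι}
    (hl : ∀ j ∈ l, k ≤ j) (hp : Precedes k p) :
    act b (b p) (Finsupp.single (k ::ₘ l) 1) =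
      act b (b (.inl k)) (act b (b p) (Finsupp.single l 1)) +
        act b ⁅b p, b (.inl k)⁆ (Finsupp.single l 1) := by
  classical
  set r := actMonomial b p l - lead R p (Finsupp.single l 1) with hr
  have act_r : act b (b (.inl k)) r = r.sum fun m' c =>
      if m'.card ≤ l.card then c • actMonomial b (.inl k) m' else 0 := by
    rw [act, Basis.constr_basis, Finsupp.linearCombination_apply]
    exact Finsupp.sum_congr fun m' hm' =>
      (if_pos (actMonomial_sub_lead_mem_polyDegreeLE b p l hm')).symm
  rw [act_basis_single, actMonomial_cons_of_precedes b hl hp, act_single b ⁅b p, b (.inl k)⁆,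
    ← hr, ← act_r, ← act_inl_lead b hl hp, ← map_add, hr, act_basis_single, add_sub_cancel]

theorem defect_act_inl_of_forall_le (b : Basis (ι ⊕ κ) R L) {p : ι ⊕ κ} {k : ι} {l : Multiset ι}
    (hl : ∀ j ∈ l, k ≤ j) (hp : Precedes k p) :
    defect (act b) (b p) (b (.inl k)) (Finsupp.single l 1) = 0 := by
  simp [defect, act_inl_of_forall_le b hl, act_cons_of_precedes b hl hp]

theorem defect_act_eq_zero_of_mem_polyDegreeLE (b : Basis (ι ⊕ κ) R L) {n : ℕ}
    (h : ∀ p q (m : Multiset ι), m.card ≤ n →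
      defect (act b) (b p) (b q) (Finsupp.single m 1) = 0)
    (x y : L) {s : Multiset ι →₀ R} (hs : s ∈ polyDegreeLE R ι n) :
    defect (act b) x y s = 0 := by
  have basis_case (p q : ι ⊕ κ) :
      polyDegreeLE R ι n ≤ LinearMap.ker (defect (act b) (b p) (b q)) := by
    rw [polyDegreeLE, Finsupp.supported_eq_span_single, Submodule.span_le]
    rintro _ ⟨m, hm, rfl⟩
    exact h p q m hm
  have bilinear_eq_zero : (defect (act b)).compr₂ (LinearMap.applyₗ s) = 0 :=
    b.ext fun p => b.ext fun q => basis_case p q hs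
  exact congr($bilinear_eq_zero x y)

theorem defect_act_cons (b : Basis (ι ⊕ κ) R L) {p q : ι ⊕ κ} {k : ι} {l : Multiset ι}
    (hl : ∀ j ∈ l, k ≤ j) (hp : Precedes k p) (hq : Precedes k q)
    (ih : ∀ x y, ∀ s ∈ polyDegreeLE R ι l.card, defect (act b) x y s = 0) :
    defect (act b) (b p) (b q) (Finsupp.single (k ::ₘ l) 1) = 0 := by
  have hs : Finsupp.single l 1 ∈ polyDegreeLE R ι l.card :=
    Finsupp.single_mem_supported R 1 (le_refl l.card)
  have defect_act (r p : ι ⊕ κ) (hr : Precedes k r) (hp : Precedes k p) :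
      defect (act b) (b r) (b (.inl k)) (act b (b p) (Finsupp.single l 1)) = 0 := by
    rw [← sub_add_cancel (act b (b p) (Finsupp.single l 1)) (lead R p (Finsupp.single l 1)),
      map_add, ih _ _ _ (act_sub_lead_mem_polyDegreeLE b p l), zero_add]
    rcases p with i | j
    · simpa [lead] using defect_act_inl_of_forall_le b (by simpa using ⟨hp.le, hl⟩) hr
    · simp [lead]
  have cyclic := congr($(defect_cyclic (act b) (b p) (b q) (b (.inl k))) (Finsupp.single l 1))
  simpa [ih _ _ _ hs, defect_act q p hq hp, defect_act p q hp hq, act_inl_of_forall_le b hl,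
    defect_swap (act b) (b p) (b (.inl k))] using cyclic

theorem defect_act_inl (b : Basis (ι ⊕ κ) R L) (p : ι ⊕ κ) {j : ι} {m : Multiset ι}
    (hj : ∀ k ∈ m, j ≤ k) : defect (act b) (b p) (b (.inl j)) (Finsupp.single m 1) = 0 := by
  rcases p with i | i
  · rcases lt_trichotomy i j with hij | rfl | hij
    · rw [defect_swap, LinearMap.neg_apply, neg_eq_zero]
      exact defect_act_inl_of_forall_le b (fun k hk => hij.le.trans (hj k hk)) hij
    · rw [defect_self, LinearMap.zero_apply]
    · exact defect_act_inl_of_forall_le b hj hij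
  · exact defect_act_inl_of_forall_le b hj trivial

theorem act_single_zero_of_mem_span (b : Basis (ι ⊕ κ) R L) {x : L}
    (hx : x ∈ Submodule.span R (Set.range (b ∘ .inr))) : act b x (Finsupp.single 0 1) = 0 := by
  suffices h : Submodule.span R (Set.range (b ∘ .inr)) ≤
      LinearMap.ker ((act b).flip (Finsupp.single 0 1)) from h hx
  rw [Submodule.span_le]
  rintro _ ⟨j, rfl⟩
  simp [act_of_forall_not_precedes b (p := .inr j) (m := 0), lead]

theorem act_single_zero_apply_singleton (b : Basis (ι ⊕ κ) R L) (x : L) (i : ι) :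
    act b x (Finsupp.single 0 1) {i} = b.repr x (.inl i) := by
  suffices h : Finsupp.lapply {i} ∘ₗ (act b).flip (Finsupp.single 0 1) = b.coord (.inl i) from
    congr($h x)
  refine b.ext fun p => ?_
  rcases p with j | j
  all_goals classical simp [act_of_forall_not_precedes b (m := 0), lead, Finsupp.single_apply]

theorem act_single_zero_eq_zero_iff (b : Basis (ι ⊕ κ) R L) {x : L} :
    act b x (Finsupp.single 0 1) = 0 ↔ x ∈ Submodule.span R (Set.range (b ∘ .inr)) := by
  refine ⟨fun h => ?_, act_single_zero_of_mem_span b⟩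
  rw [Set.range_comp, b.mem_span_image]
  rintro (i | j) hp
  · rw [Finset.mem_coe, Finsupp.mem_support_iff, ← act_single_zero_apply_singleton, h] at hp
    exact (hp rfl).elim
  · exact Set.mem_range_self j

theorem defect_act_basis_single (b : Basis (ι ⊕ κ) R L)
    (hb : ∀ i j, ⁅b (.inr i), b (.inr j)⁆ ∈ Submodule.span R (Set.range (b ∘ .inr)))
    (p q : ι ⊕ κ) (m : Multiset ι) : defect (act b) (b p) (b q) (Finsupp.single m 1) = 0 := by
  induction hn : m.card using Nat.strong_induction_on generalizing p q m with
  | _ n ih =>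
  subst hn
  have of_inl {i : ι} (q : ι ⊕ κ) (hi : ∀ k ∈ m, i ≤ k) :
      defect (act b) (b (.inl i)) (b q) (Finsupp.single m 1) = 0 := by
    rw [defect_swap, LinearMap.neg_apply, defect_act_inl b q hi, neg_zero]
  rcases eq_or_ne m 0 with rfl | hm
  · rcases p with i | i
    · exact of_inl q (by simp)
    rcases q with j | j
    · exact defect_act_inl b _ (by simp)
    have killed (j : κ) : act b (b (.inr j)) (Finsupp.single 0 1) = 0 :=
      act_single_zero_of_mem_span b (Submodule.subset_span ⟨j, rfl⟩)
    simp [defect, killed, act_single_zero_of_mem_span b (hb i j)]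
  · obtain ⟨k, l, rfl, hl⟩ := exists_cons_forall_le hm
    have minimal {i : ι} (h : ¬Precedes (κ := κ) k (.inl i)) : ∀ j ∈ k ::ₘ l, i ≤ j := by
      have hik : i ≤ k := not_lt.1 h
      simpa using ⟨hik, fun j hj => hik.trans (hl j hj)⟩
    by_cases hp : Precedes k p
    · by_cases hq : Precedes k q
      · refine defect_act_cons b hl hp hq fun x y s hs =>
          defect_act_eq_zero_of_mem_polyDegreeLE b (fun p q m hm => ih _ ?_ p q m rfl) x y hs
        simpa [Nat.lt_succ_iff] using hm
      · rcases q with j | j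
        · exact defect_act_inl b p (minimal hq)
        · exact (hq trivial).elim
    · rcases p with i | i
      · exact of_inl q (minimal hp)
      · exact (hp trivial).elim

theorem defect_act_eq_zero (b : Basis (ι ⊕ κ) R L)
    (hb : ∀ i j, ⁅b (.inr i), b (.inr j)⁆ ∈ Submodule.span R (Set.range (b ∘ .inr))) :
    defect (act b) = 0 :=
  b.ext fun p => b.ext fun q => Finsupp.lhom_ext' fun m => LinearMap.ext_ring
    (defect_act_basis_single b hb p q m)

end InducedRepresentation

section LeftIdeal

attribute [local instance] LieRing.ofAssociativeRing

theorem exists_linearOrder_basis_sum {F : Type*} {L : Type w} [Field F] [AddCommGroup L]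
    [Module F L] (J : Submodule F L) :
    ∃ (ι κ : Type w) (_ : LinearOrder ι) (b : Basis (ι ⊕ κ) F L),
      Submodule.span F (Set.range (b ∘ .inr)) = J := by
  obtain ⟨C, hC⟩ := J.exists_isCompl
  classical
  let bC := Basis.ofVectorSpace F C
  let bJ := Basis.ofVectorSpace F J
  let b := (bC.prod bJ).map (Submodule.prodEquivOfIsCompl C J hC.symm)
  refine ⟨_, _, linearOrderOfSTO WellOrderingRel, b, ?_⟩
  have b_inr : b ∘ .inr = J.subtype ∘ bJ := by
    ext j
    simp [b]
  rw [b_inr, Set.range_comp, Submodule.span_image, bJ.span_eq, Submodule.map_top,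
    Submodule.range_subtype]

theorem exists_lieHom_end_apply_eq_zero_iff {F : Type*} {L : Type w} [Field F] [LieRing L]
    [LieAlgebra F L] (J : LieSubalgebra F L) :
    ∃ (ι : Type w) (ρ : L →ₗ⁅F⁆ Module.End F (Multiset ι →₀ F)) (v : Multiset ι →₀ F),
      ∀ x, ρ x v = 0 ↔ x ∈ J := by
  obtain ⟨ι, κ, _, b, hb⟩ := exists_linearOrder_basis_sum J.toSubmodule
  have b_inr_mem (j : κ) : b (.inr j) ∈ J := hb.le (Submodule.subset_span ⟨j, rfl⟩)
  have defect_eq_zero := defect_act_eq_zero b fun i j =>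
    hb.ge (J.lie_mem (b_inr_mem i) (b_inr_mem j))
  refine ⟨ι, { act b with map_lie' := fun {x y} => ?_ }, Finsupp.single 0 1, fun x => ?_⟩
  · exact (sub_eq_zero.1 congr($defect_eq_zero x y)).symm
  · exact (act_single_zero_eq_zero_iff b).trans (by rw [hb]; rfl)

theorem mem_of_ι_mem_ideal_span {F L : Type*} [Field F] [LieRing L] [LieAlgebra F L]
    (J : LieSubalgebra F L) {x : L}
    (hx : UniversalEnvelopingAlgebra.ι F x ∈ Ideal.span (UniversalEnvelopingAlgebra.ι F '' J)) :
    x ∈ J := by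
  obtain ⟨ι, ρ, v, hρ⟩ := exists_lieHom_end_apply_eq_zero_iff J
  let Φ := UniversalEnvelopingAlgebra.lift F ρ
  have Φ_ι (y : L) : Φ (UniversalEnvelopingAlgebra.ι F y) v = ρ y v := by
    simp [Φ]
  have Φ_eq_zero {u} (hu : u ∈ Ideal.span (UniversalEnvelopingAlgebra.ι F '' (J : Set L))) :
      Φ u v = 0 := by
    induction hu using Submodule.span_induction with
    | mem u hu =>
      obtain ⟨y, hy, rfl⟩ := hu
      exact (Φ_ι y).trans ((hρ y).2 hy)
    | zero => simp
    | add u u' _ _ hu hu' => simp [hu, hu']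
    | smul a u _ hu => simp [hu]
  exact (hρ x).1 ((Φ_ι x).symm.trans (Φ_eq_zero hx))

end LeftIdeal

/-! ### Leading forms in graded algebras -/

section Graded

attribute [local instance] LieRing.ofAssociativeRing

open Finset.HasAntidiagonal (antidiagonal mem_antidiagonal)

variable {R A : Type*} [CommRing R] [Ring A] [Algebra R A]
variable (𝒜 : ℕ → Submodule R A) [GradedAlgebra 𝒜]

theorem proj_mul (n : ℕ) (a b : A) :
    proj 𝒜 n (a * b) = ∑ ij ∈ antidiagonal n, proj 𝒜 ij.1 a * proj 𝒜 ij.2 b := by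
  simp only [GradedAlgebra.proj_apply, DirectSum.decompose_mul,
    DirectSum.coe_mul_apply_eq_sum_antidiagonal]

theorem proj_lie (n : ℕ) (a b : A) :
    proj 𝒜 n ⁅a, b⁆ = ∑ ij ∈ antidiagonal n, ⁅proj 𝒜 ij.1 a, proj 𝒜 ij.2 b⁆ := by
  simp only [LieRing.of_associative_ring_bracket, map_sub, proj_mul, Finset.sum_sub_distrib]
  rw [← Finset.Nat.sum_antidiagonal_swap (f := fun ij => proj 𝒜 ij.1 b * proj 𝒜 ij.2 a)]
  rfl

theorem eq_of_forall_proj_eq {a b : A} (h : ∀ n, proj 𝒜 n a = proj 𝒜 n b) : a = b :=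
  (DirectSum.decompose 𝒜).injective (DFinsupp.ext fun n => Subtype.ext (h n))

theorem mem_of_forall_proj_mem {a : A} {M : Submodule R A} (h : ∀ n, proj 𝒜 n a ∈ M) : a ∈ M := by
  classical
  rw [← DirectSum.sum_support_decompose 𝒜 a]
  exact sum_mem fun n _ => h n

/-- The elements all of whose homogeneous components have degree less than `n`. -/
def degreeLT (n : ℕ) : Submodule R A :=
  ⨅ k ≥ n, LinearMap.ker (proj 𝒜 k)

/-- The leading forms of degree `n` of the elements of `K`, together with zero. -/
def leadingForms (K : Submodule R A) (n : ℕ) : Submodule R A :=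
  (K ⊓ degreeLT 𝒜 (n + 1)).map (proj 𝒜 n)

variable {𝒜}

theorem mem_degreeLT {n : ℕ} {a : A} : a ∈ degreeLT 𝒜 n ↔ ∀ k ≥ n, proj 𝒜 k a = 0 := by
  simp only [degreeLT, Submodule.mem_iInf, LinearMap.mem_ker]

variable (𝒜) in
theorem exists_mem_degreeLT (a : A) : ∃ n, a ∈ degreeLT 𝒜 n := by
  classical
  obtain ⟨n, hn⟩ := (DirectSum.decompose 𝒜 a).support.exists_nat_subset_range
  refine ⟨n, mem_degreeLT.2 fun k hk => ?_⟩
  by_contra h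
  exact hk.not_gt (Finset.mem_range.1 (hn ((GradedAlgebra.mem_support_iff 𝒜 a k).2 h)))

theorem eq_zero_of_mem_degreeLT_zero {a : A} (ha : a ∈ degreeLT 𝒜 0) : a = 0 :=
  eq_of_forall_proj_eq 𝒜 fun n => by rw [mem_degreeLT.1 ha n n.zero_le, map_zero]

theorem proj_of_mem {n : ℕ} {a : A} (ha : a ∈ 𝒜 n) : proj 𝒜 n a = a :=
  DirectSum.decompose_of_mem_same 𝒜 ha

theorem proj_of_mem_ne {m n : ℕ} {a : A} (ha : a ∈ 𝒜 m) (hmn : m ≠ n) : proj 𝒜 n a = 0 :=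
  DirectSum.decompose_of_mem_ne 𝒜 ha hmn

variable (𝒜) in
theorem proj_mem (n : ℕ) (a : A) : proj 𝒜 n a ∈ 𝒜 n :=
  SetLike.coe_mem _

theorem mul_mem_degreeLT {m n : ℕ} {a b : A} (ha : a ∈ degreeLT 𝒜 (m + 1))
    (hb : b ∈ degreeLT 𝒜 (n + 1)) : a * b ∈ degreeLT 𝒜 (m + n + 1) := by
  refine mem_degreeLT.2 fun k hk => ?_
  rw [proj_mul]
  refine Finset.sum_eq_zero fun ij hij => ?_
  rw [mem_antidiagonal] at hij
  rcases le_or_gt (m + 1) ij.1 with h | h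
  · rw [mem_degreeLT.1 ha _ h, zero_mul]
  · rw [mem_degreeLT.1 hb _ (by omega), mul_zero]

theorem proj_mul_of_mem_degreeLT {m n : ℕ} {a b : A} (ha : a ∈ degreeLT 𝒜 (m + 1))
    (hb : b ∈ degreeLT 𝒜 (n + 1)) : proj 𝒜 (m + n) (a * b) = proj 𝒜 m a * proj 𝒜 n b := by
  rw [proj_mul]
  refine Finset.sum_eq_single (m, n) (fun ij hij hne => ?_) (by simp)
  rw [mem_antidiagonal] at hij
  rcases le_or_gt (m + 1) ij.1 with h | h
  · rw [mem_degreeLT.1 ha _ h, zero_mul]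
  · have hj : ij.2 ≠ n := fun hj => hne (Prod.ext (by omega) hj)
    rw [mem_degreeLT.1 hb _ (by omega), mul_zero]

theorem leadingForms_le (K : Submodule R A) (n : ℕ) : leadingForms 𝒜 K n ≤ 𝒜 n := by
  rintro _ ⟨a, -, rfl⟩
  exact proj_mem 𝒜 n a

theorem lie_mem_leadingForms (K : LieSubalgebra R A) {m n : ℕ} {a b : A}
    (ha : a ∈ leadingForms 𝒜 K.toSubmodule m) (hb : b ∈ leadingForms 𝒜 K.toSubmodule n) :
    ⁅a, b⁆ ∈ leadingForms 𝒜 K.toSubmodule (m + n) := by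
  obtain ⟨a, ⟨haK, ha⟩, rfl⟩ := ha
  obtain ⟨b, ⟨hbK, hb⟩, rfl⟩ := hb
  have hba := mul_mem_degreeLT hb ha
  have proj_hba := proj_mul_of_mem_degreeLT hb ha
  rw [add_comm n m] at hba proj_hba
  refine ⟨⁅a, b⁆, ⟨K.lie_mem haK hbK, sub_mem (mul_mem_degreeLT ha hb) hba⟩, ?_⟩
  rw [LieRing.of_associative_ring_bracket, map_sub, proj_mul_of_mem_degreeLT ha hb, proj_hba,
    ← LieRing.of_associative_ring_bracket]

theorem leadingForms_mono {K K' : Submodule R A} (hK : K' ≤ K) (n : ℕ) :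
    leadingForms 𝒜 K' n ≤ leadingForms 𝒜 K n :=
  Submodule.map_mono (inf_le_inf_right _ hK)

theorem le_of_leadingForms_le {K K' : Submodule R A} (hK : K' ≤ K)
    (h : ∀ n, leadingForms 𝒜 K n ≤ leadingForms 𝒜 K' n) : K ≤ K' := by
  have of_mem_degreeLT (n : ℕ) : ∀ a ∈ K, a ∈ degreeLT 𝒜 n → a ∈ K' := by
    induction n with
    | zero => exact fun a _ ha => eq_zero_of_mem_degreeLT_zero ha ▸ zero_mem K'
    | succ n ih =>
      intro a haK ha
      obtain ⟨b, ⟨hbK', hb⟩, hab⟩ := h n ⟨a, ⟨haK, ha⟩, rfl⟩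
      refine (K'.sub_mem_iff_left hbK').1 (ih _ (sub_mem haK (hK hbK')) ?_)
      refine mem_degreeLT.2 fun k hk => ?_
      rcases hk.eq_or_lt with rfl | hk
      · rw [map_sub, hab, sub_self]
      · exact mem_degreeLT.1 (sub_mem ha hb) k hk
  intro a ha
  obtain ⟨n, hn⟩ := exists_mem_degreeLT 𝒜 a
  exact of_mem_degreeLT n a ha hn

variable (𝒜) in
/-- The Lie subalgebra of the elements whose components lie in a given family of submodules
compatible with the grading. -/
def lieSubalgebraOfComponents (M : ℕ → Submodule R A)
    (hM : ∀ {i j a b}, a ∈ M i → b ∈ M j → ⁅a, b⁆ ∈ M (i + j)) : LieSubalgebra R A where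
  toSubmodule := ⨅ n, (M n).comap (proj 𝒜 n)
  lie_mem' {a b} ha hb := by
    simp only [AddSubsemigroup.mem_carrier, AddSubmonoid.mem_toSubsemigroup,
      Submodule.mem_toAddSubmonoid, Submodule.mem_iInf, Submodule.mem_comap] at ha hb ⊢
    intro n
    rw [proj_lie]
    exact sum_mem fun ij hij => mem_antidiagonal.1 hij ▸ hM (ha ij.1) (hb ij.2)

theorem mem_lieSubalgebraOfComponents {M : ℕ → Submodule R A}
    {hM : ∀ {i j a b}, a ∈ M i → b ∈ M j → ⁅a, b⁆ ∈ M (i + j)} {a : A} :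
    a ∈ lieSubalgebraOfComponents 𝒜 M hM ↔ ∀ n, proj 𝒜 n a ∈ M n := by
  rw [← LieSubalgebra.mem_toSubmodule]
  simp only [lieSubalgebraOfComponents, Submodule.mem_iInf, Submodule.mem_comap]

theorem mem_lieSubalgebraOfComponents_of_mem {M : ℕ → Submodule R A}
    {hM : ∀ {i j a b}, a ∈ M i → b ∈ M j → ⁅a, b⁆ ∈ M (i + j)} {n : ℕ} {a : A} (hn : a ∈ 𝒜 n)
    (ha : a ∈ M n) : a ∈ lieSubalgebraOfComponents 𝒜 M hM := by
  refine mem_lieSubalgebraOfComponents.2 fun k => ?_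
  rcases eq_or_ne n k with rfl | hk
  · rwa [proj_of_mem hn]
  · rw [proj_of_mem_ne hn hk]
    exact zero_mem _

variable (𝒜) in
/-- The Lie subalgebra spanned by the leading forms of the elements of `K`. -/
def leadingSubalgebra (K : LieSubalgebra R A) : LieSubalgebra R A :=
  lieSubalgebraOfComponents 𝒜 (leadingForms 𝒜 K.toSubmodule) (lie_mem_leadingForms K)

variable (𝒜) in
/-- The left ideal generated by the leading forms of degree less than `n` of the elements of `K`. -/
def lowerLeadingIdeal (K : Submodule R A) (n : ℕ) : Ideal A :=
  Ideal.span {a | ∃ m < n, a ∈ leadingForms 𝒜 K m}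

theorem linearIndependent_of_proj {Y : Type*} {h : Y → A} {d : Y → ℕ}
    (hd : ∀ y, h y ∈ degreeLT 𝒜 (d y + 1))
    (hli : LinearIndependent A fun y => proj 𝒜 (d y) (h y)) : LinearIndependent A h := by
  refine linearIndependent_iff'.2 fun s q hq => ?_
  have components_eq_zero (N : ℕ) (hN : ∀ y ∈ s, ∀ k, N ≤ k + d y → proj 𝒜 k (q y) = 0) :
      ∀ y ∈ s, q y = 0 := by
    induction N with
    | zero =>
      exact fun y hy => eq_zero_of_mem_degreeLT_zero (mem_degreeLT.2 fun k _ =>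
        hN y hy k (Nat.zero_le _))
    | succ N ih =>
      let r (y : Y) : A := if d y ≤ N then proj 𝒜 (N - d y) (q y) else 0
      have proj_mul_eq (y : Y) (hy : y ∈ s) :
          r y • proj 𝒜 (d y) (h y) = proj 𝒜 N (q y • h y) := by
        by_cases hdN : d y ≤ N
        · have hq : q y ∈ degreeLT 𝒜 (N - d y + 1) :=
            mem_degreeLT.2 fun k hk => hN y hy k (by omega)
          simp only [r, if_pos hdN, smul_eq_mul]
          rw [← proj_mul_of_mem_degreeLT hq (hd y), Nat.sub_add_cancel hdN]
        · have hq : q y = 0 :=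
            eq_zero_of_mem_degreeLT_zero (mem_degreeLT.2 fun k _ => hN y hy k (by omega))
          simp only [r, if_neg hdN, hq, zero_smul, map_zero]
      have r_eq_zero := linearIndependent_iff'.1 hli s r (by
        rw [Finset.sum_congr rfl proj_mul_eq, ← map_sum, hq, map_zero])
      refine ih fun y hy k hk => ?_
      rcases hk.eq_or_lt with rfl | hk
      · simpa only [r, Nat.le_add_left, if_true, Nat.add_sub_cancel] using r_eq_zero y hy
      · exact hN y hy k hk
  choose n hn using fun y => exists_mem_degreeLT 𝒜 (q y)
  refine components_eq_zero (s.sup fun y => n y + d y) fun y hy k hk => mem_degreeLT.1 (hn y) k ?_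
  have := hk.trans' (Finset.le_sup (f := fun y => n y + d y) hy)
  omega

end Graded

/-! ### The free associative algebra -/

section WordAlgebra

variable {R X Y : Type*} [CommRing R]

variable (R X) in
/-- The free associative algebra on `X`: formal combinations of words, where the free monoid of
words under concatenation is written additively so that Mathlib's grading of
`AddMonoidAlgebra` applies. -/
abbrev WordAlgebra := AddMonoidAlgebra R (FreeAddMonoid X)

/-- The generator `x` of the free associative algebra. -/
noncomputable def letter (x : X) : WordAlgebra R X :=
  AddMonoidAlgebra.single (FreeAddMonoid.of x) 1

/-- The number of letters of a word, as an additive homomorphism. -/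
def wordLength (X : Type*) : FreeAddMonoid X →+ ℕ where
  toFun := FreeAddMonoid.length
  map_zero' := FreeAddMonoid.length_zero
  map_add' := FreeAddMonoid.length_add

variable (R X) in
/-- The grading of the free associative algebra by word length. -/
noncomputable abbrev wordGrading : ℕ → Submodule R (WordAlgebra R X) :=
  AddMonoidAlgebra.gradeBy R (wordLength X)

/-- Left transduction by `x`: keep the words starting with `x` and delete that letter. -/
noncomputable def leftDeriv (x : X) : WordAlgebra R X →+ WordAlgebra R X :=
  AddMonoidAlgebra.comapDomainAddMonoidHom (FreeAddMonoid.of x + ·) (add_right_injective _)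

theorem coeff_leftDeriv (x : X) (a : WordAlgebra R X) (w : FreeAddMonoid X) :
    (leftDeriv x a).coeff w = a.coeff (FreeAddMonoid.of x + w) := rfl

theorem word_induction_concat {motive : FreeAddMonoid X → Prop} (w : FreeAddMonoid X)
    (zero : motive 0) (add_of : ∀ w x, motive w → motive (w + FreeAddMonoid.of x)) : motive w :=
  List.reverseRecOn (motive := motive) w zero add_of

theorem wordAlgebra_induction {motive : WordAlgebra R X → Prop} (a : WordAlgebra R X)
    (algebraMap : ∀ r, motive (algebraMap R _ r))
    (add : ∀ a b, motive a → motive b → motive (a + b))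
    (letter_mul : ∀ x a, motive a → motive (letter x * a)) : motive a := by
  induction a using AddMonoidAlgebra.induction_linear with
  | zero => simpa only [map_zero] using algebraMap 0
  | add a b ha hb => exact add a b ha hb
  | single w r =>
    induction w using FreeAddMonoid.inductionOn' with
    | zero => exact algebraMap r
    | of_add x w ih =>
      simpa only [letter, AddMonoidAlgebra.single_mul_single, one_mul] using letter_mul x _ ih

theorem wordAlgebra_induction_right {motive : WordAlgebra R X → Prop} (a : WordAlgebra R X)
    (algebraMap : ∀ r, motive (algebraMap R _ r))
    (add : ∀ a b, motive a → motive b → motive (a + b))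
    (mul_letter : ∀ a x, motive a → motive (a * letter x)) : motive a := by
  induction a using AddMonoidAlgebra.induction_linear with
  | zero => simpa only [map_zero] using algebraMap 0
  | add a b ha hb => exact add a b ha hb
  | single w r =>
    induction w using word_induction_concat with
    | zero => exact algebraMap r
    | add_of w x ih =>
      simpa only [letter, AddMonoidAlgebra.single_mul_single, mul_one] using mul_letter _ x ih

theorem leftDeriv_letter_mul_self (x : X) (a : WordAlgebra R X) :
    leftDeriv x (letter x * a) = a := by
  ext w
  rw [coeff_leftDeriv, letter, AddMonoidAlgebra.coeff_single_mul_add, one_mul]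

theorem leftDeriv_letter_mul_of_ne {x y : X} (hxy : x ≠ y) (a : WordAlgebra R X) :
    leftDeriv x (letter y * a) = 0 := by
  ext w
  exact AddMonoidAlgebra.coeff_single_mul_of_forall_add_ne _ _ fun v hv =>
    hxy (List.cons.inj hv).1.symm

theorem leftDeriv_algebraMap_mul (x : X) (r : R) (a : WordAlgebra R X) :
    leftDeriv x (algebraMap R _ r * a) = algebraMap R _ r * leftDeriv x a := by
  ext w
  simp only [coeff_leftDeriv, ← Algebra.smul_def, AddMonoidAlgebra.coeff_smul_apply]

theorem leftDeriv_algebraMap (x : X) (r : R) :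
    leftDeriv x (algebraMap R (WordAlgebra R X) r) = 0 := by
  ext w
  simp [coeff_leftDeriv]

section WordLift

variable {B : Type*} [Ring B] [Algebra R B]

variable (R) in
/-- The extension of a map on the generators to the free associative algebra. -/
noncomputable def wordLift (f : X → B) : WordAlgebra R X →ₐ[R] B :=
  AddMonoidAlgebra.lift R B _
    (AddMonoidHom.toMultiplicativeLeft (FreeAddMonoid.lift fun x => Additive.ofMul (f x)))

theorem wordLift_letter (f : X → B) (x : X) : wordLift R f (letter x) = f x := by
  simp [wordLift, letter]

end WordLift

/-- The constant term, as an algebra homomorphism. -/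
noncomputable def constantCoeff : WordAlgebra R X →ₐ[R] R :=
  wordLift R fun _ => 0

theorem constantCoeff_letter (x : X) : constantCoeff (letter x : WordAlgebra R X) = 0 :=
  wordLift_letter _ x

theorem constantCoeff_algebraMap (r : R) : constantCoeff (algebraMap R (WordAlgebra R X) r) = r :=
  constantCoeff.commutes r

theorem constantCoeff_apply (a : WordAlgebra R X) : constantCoeff a = a.coeff 0 := by
  induction a using wordAlgebra_induction with
  | algebraMap r =>
    rw [constantCoeff_algebraMap, AddMonoidAlgebra.coe_algebraMap]
    exact Finsupp.single_eq_same.symm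
  | add a b ha hb => simp only [map_add, ha, hb, AddMonoidAlgebra.coeff_add, Finsupp.add_apply]
  | letter_mul x a _ =>
    rw [map_mul, constantCoeff_letter, zero_mul, letter,
      AddMonoidAlgebra.coeff_single_mul_of_forall_add_ne]
    exact fun v => List.cons_ne_nil _ _

theorem leftDeriv_mul (x : X) (a b : WordAlgebra R X) :
    leftDeriv x (a * b) = leftDeriv x a * b + constantCoeff a • leftDeriv x b := by
  induction a using wordAlgebra_induction with
  | algebraMap r =>
    rw [leftDeriv_algebraMap_mul, leftDeriv_algebraMap, constantCoeff_algebraMap, zero_mul,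
      zero_add, Algebra.smul_def]
  | add a a' ha ha' =>
    rw [add_mul, map_add, ha, ha', map_add, map_add, add_mul, add_smul, add_add_add_comm]
  | letter_mul y a _ =>
    rw [mul_assoc, map_mul constantCoeff, constantCoeff_letter, zero_mul, zero_smul, add_zero]
    rcases eq_or_ne x y with rfl | hxy
    · rw [leftDeriv_letter_mul_self, leftDeriv_letter_mul_self]
    · rw [leftDeriv_letter_mul_of_ne hxy, leftDeriv_letter_mul_of_ne hxy, zero_mul]

theorem letter_mem_wordGrading (x : X) : letter x ∈ wordGrading R X 1 :=
  AddMonoidAlgebra.single_mem_gradeBy _ _ _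

theorem proj_zero_eq_algebraMap (a : WordAlgebra R X) :
    proj (wordGrading R X) 0 a = algebraMap R _ (constantCoeff a) := by
  induction a using wordAlgebra_induction with
  | algebraMap r =>
    rw [constantCoeff_algebraMap]
    exact DirectSum.decompose_of_mem_same _ (SetLike.algebraMap_mem_graded (wordGrading R X) r)
  | add a b ha hb => rw [map_add, ha, hb, map_add, map_add]
  | letter_mul x a _ =>
    rw [map_mul constantCoeff, constantCoeff_letter, zero_mul, map_zero]
    exact DirectSum.coe_decompose_mul_of_left_mem_of_not_le _
      (letter_mem_wordGrading (R := R) x) one_pos.not_ge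

theorem exists_eq_algebraMap_add_linearCombination_letter (p : WordAlgebra R X) :
    ∃ (r : R) (q : X →₀ WordAlgebra R X),
      p = algebraMap R _ r + Finsupp.linearCombination _ letter q ∧
        ∀ w x, p.coeff (w + FreeAddMonoid.of x) = (q x).coeff w := by
  classical
  induction p using wordAlgebra_induction_right with
  | algebraMap r =>
    exact ⟨r, 0, by simp, fun w x => by simp⟩
  | add a b ha hb =>
    obtain ⟨r, q, ha, hq⟩ := ha
    obtain ⟨r', q', hb, hq'⟩ := hb
    refine ⟨r + r', q + q', ?_, fun w x => ?_⟩
    · rw [ha, hb, map_add, map_add, add_add_add_comm]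
    · simp [hq, hq']
  | mul_letter a y _ =>
    refine ⟨0, Finsupp.single y a, by simp, fun w x => ?_⟩
    rcases eq_or_ne y x with rfl | hyx
    · rw [letter, AddMonoidAlgebra.coeff_mul_single_add, mul_one, Finsupp.single_eq_same]
    · rw [letter, AddMonoidAlgebra.coeff_mul_single_of_forall_add_ne, Finsupp.single_eq_of_ne' hyx,
        AddMonoidAlgebra.coeff_zero, Finsupp.zero_apply]
      exact fun v hv => hyx (List.append_singleton_inj.1 hv).2

theorem constantCoeff_wordLift {h : Y → WordAlgebra R X} (hh : ∀ y, constantCoeff (h y) = 0)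
    (p : WordAlgebra R Y) : constantCoeff (wordLift R h p) = constantCoeff p := by
  induction p using wordAlgebra_induction with
  | algebraMap r => rw [AlgHom.commutes, constantCoeff_algebraMap, constantCoeff_algebraMap]
  | add a b ha hb => rw [map_add, map_add, map_add, ha, hb]
  | letter_mul y a _ =>
    rw [map_mul, map_mul, wordLift_letter, hh, map_mul, constantCoeff_letter, zero_mul, zero_mul]

theorem wordLift_injective {h : Y → WordAlgebra R X} (hli : LinearIndependent (WordAlgebra R X) h)
    (hh : ∀ y, constantCoeff (h y) = 0) : Function.Injective (wordLift R h) := by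
  refine (injective_iff_map_eq_zero _).2 fun p hp => ?_
  ext w
  induction w using word_induction_concat generalizing p with
  | zero =>
    rw [← constantCoeff_apply, ← constantCoeff_wordLift hh, hp, map_zero]
    rfl
  | add_of w y ih =>
    obtain ⟨r, q, hpq, hq⟩ := exists_eq_algebraMap_add_linearCombination_letter p
    have r_eq_zero : r = 0 := by
      have hc := constantCoeff_wordLift hh p
      rw [hp, hpq, map_zero, map_add, constantCoeff_algebraMap,
        Finsupp.linearCombination_apply, map_finsuppSum] at hc
      simpa [constantCoeff_letter] using hc.symm
    have lift_q : Finsupp.linearCombination _ h (q.mapRange (wordLift R h) (map_zero _)) = 0 := by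
      rw [← hp, hpq, r_eq_zero, map_zero, zero_add, Finsupp.linearCombination_apply,
        Finsupp.linearCombination_apply, map_finsuppSum, Finsupp.sum_mapRange_index (by simp)]
      simp [wordLift_letter]
    have lift_q_eq_zero := linearIndependent_iff.1 hli _ lift_q
    rw [hq, ih (q y) (by simpa using DFunLike.congr_fun lift_q_eq_zero y)]
    rfl

section WeakAlgorithm

variable {h : Y → WordAlgebra R X} {d : Y → ℕ} {I : ℕ → Ideal (WordAlgebra R X)}

theorem constantCoeff_eq_zero_of_sum_mul_eq_zero (hd : ∀ y, h y ∈ wordGrading R X (d y))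
    (hI : ∀ y n, d y < n → h y ∈ I n)
    (hli : ∀ n, LinearIndepOn R (fun y => ((I n).restrictScalars R).mkQ (h y)) {y | d y = n})
    {s : Finset Y} {q : Y → WordAlgebra R X} (hq : ∑ y ∈ s, q y * h y = 0) {y : Y} (hy : y ∈ s) :
    constantCoeff (q y) = 0 := by
  classical
  set n := d y with hn
  refine linearIndepOn_iff'.1 (hli n) {z ∈ s | d z = n} (fun z => constantCoeff (q z))
    (by simp) ?_ y (by simp [hy, hn])
  have proj_of_eq (z : Y) (hz : d z = n) :
      proj (wordGrading R X) n (q z * h z) = constantCoeff (q z) • h z := by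
    rw [GradedAlgebra.proj_apply,
      DirectSum.coe_decompose_mul_of_right_mem_of_le _ (hd z) hz.le, hz, Nat.sub_self,
      ← GradedAlgebra.proj_apply, proj_zero_eq_algebraMap, Algebra.smul_def]
  have proj_of_ne (z : Y) (hz : d z ≠ n) :
      proj (wordGrading R X) n (q z * h z) ∈ I n := by
    rw [GradedAlgebra.proj_apply, DirectSum.coe_decompose_mul_of_right_mem _ _ (hd z)]
    split_ifs with hle
    · exact Ideal.mul_mem_left _ _ (hI z n (hle.lt_of_ne hz))
    · exact zero_mem _
  have sum_add_sum : ∑ z ∈ s with d z = n, constantCoeff (q z) • h z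
      + ∑ z ∈ s with d z ≠ n, proj (wordGrading R X) n (q z * h z) = 0 := by
    rw [← Finset.sum_congr rfl fun z hz => proj_of_eq z (Finset.mem_filter.1 hz).2,
      Finset.sum_filter_add_sum_filter_not, ← map_sum, hq, map_zero]
  simp only [← map_smul, ← map_sum]
  rw [Submodule.mkQ_apply, Submodule.Quotient.mk_eq_zero, eq_neg_of_add_eq_zero_left sum_add_sum,
    Submodule.restrictScalars_mem]
  exact neg_mem (sum_mem fun z hz => proj_of_ne z (Finset.mem_filter.1 hz).2)

theorem linearIndependent_of_linearIndepOn_mkQ (hd : ∀ y, h y ∈ wordGrading R X (d y))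
    (hI : ∀ y n, d y < n → h y ∈ I n)
    (hli : ∀ n, LinearIndepOn R (fun y => ((I n).restrictScalars R).mkQ (h y)) {y | d y = n}) :
    LinearIndependent (WordAlgebra R X) h := by
  refine linearIndependent_iff'.2 fun s q hq y hy => ?_
  simp only [smul_eq_mul] at hq
  ext w
  induction w using FreeAddMonoid.inductionOn' generalizing q with
  | zero =>
    rw [← constantCoeff_apply, constantCoeff_eq_zero_of_sum_mul_eq_zero hd hI hli hq hy]
    rfl
  | of_add x w ih =>
    rw [← coeff_leftDeriv]
    refine ih (fun z => leftDeriv x (q z)) ?_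
    rw [← map_zero (leftDeriv x), ← hq, map_sum]
    refine Finset.sum_congr rfl fun z hz => ?_
    rw [leftDeriv_mul, constantCoeff_eq_zero_of_sum_mul_eq_zero hd hI hli hq hz, zero_smul,
      add_zero]

end WeakAlgorithm

end WordAlgebra

/-! ### Free Lie algebras -/

attribute [local instance] LieRing.ofAssociativeRing

section ToWords

variable {R X Y : Type*} [CommRing R]

theorem range_lift_le {L : Type*} [LieRing L] [LieAlgebra R L] {f : X → L} {M : LieSubalgebra R L}
    (hf : ∀ x, f x ∈ M) : (FreeLieAlgebra.lift R f).range ≤ M := by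
  have lift_eq : FreeLieAlgebra.lift R f =
      M.incl.comp (FreeLieAlgebra.lift R fun x => (⟨f x, hf x⟩ : M)) :=
    FreeLieAlgebra.hom_ext fun x => by
      rw [LieHom.comp_apply, FreeLieAlgebra.lift_of_apply, FreeLieAlgebra.lift_of_apply]
      rfl
  rintro _ ⟨x, rfl⟩
  rw [lift_eq]
  exact SetLike.coe_mem _

variable (R X) in
/-- The canonical map from the free Lie algebra to the free associative algebra. -/
noncomputable def toWords : FreeLieAlgebra R X →ₗ⁅R⁆ WordAlgebra R X :=
  FreeLieAlgebra.lift R letter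

theorem wordLift_toWords {B : Type*} [Ring B] [Algebra R B] (f : X → B) (x : FreeLieAlgebra R X) :
    wordLift R f (toWords R X x) = FreeLieAlgebra.lift R f x := by
  have comp_eq : (wordLift R f).toLieHom.comp (toWords R X) = FreeLieAlgebra.lift R f :=
    FreeLieAlgebra.hom_ext fun y => by
      rw [LieHom.comp_apply, toWords, FreeLieAlgebra.lift_of_apply, FreeLieAlgebra.lift_of_apply]
      exact wordLift_letter f y
  exact LieHom.congr_fun comp_eq x

theorem proj_mem_range_toWords {a : WordAlgebra R X} (ha : a ∈ (toWords R X).range) (n : ℕ) :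
    proj (wordGrading R X) n a ∈ (toWords R X).range := by
  have range_le : (toWords R X).range ≤ lieSubalgebraOfComponents (wordGrading R X)
      (fun _ => (toWords R X).range.toSubmodule) (LieSubalgebra.lie_mem _) :=
    range_lift_le fun x => mem_lieSubalgebraOfComponents_of_mem (letter_mem_wordGrading x)
      ⟨FreeLieAlgebra.of R x, FreeLieAlgebra.lift_of_apply letter x⟩
  exact mem_lieSubalgebraOfComponents.1 (range_le ha) n

theorem constantCoeff_eq_zero_of_mem_range_toWords {a : WordAlgebra R X}
    (ha : a ∈ (toWords R X).range) : constantCoeff a = 0 := by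
  obtain ⟨x, rfl⟩ := ha
  have lift_eq_zero : FreeLieAlgebra.lift R (fun _ : X => (0 : R)) = 0 :=
    FreeLieAlgebra.hom_ext fun x => FreeLieAlgebra.lift_of_apply _ x
  exact (wordLift_toWords _ x).trans (LieHom.congr_fun lift_eq_zero x)

variable {F : Type*} [Field F]

theorem mem_of_toWords_mem_ideal_span (J : LieSubalgebra F (FreeLieAlgebra F X))
    {x : FreeLieAlgebra F X} (hx : toWords F X x ∈ Ideal.span (toWords F X '' J)) : x ∈ J := by
  let Ψ := wordLift F (UniversalEnvelopingAlgebra.ι F ∘ FreeLieAlgebra.of F (X := X))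
  have Ψ_toWords (y : FreeLieAlgebra F X) : Ψ (toWords F X y) = UniversalEnvelopingAlgebra.ι F y :=
    (wordLift_toWords _ y).trans (by rw [FreeLieAlgebra.lift_comp_of])
  have hΨ := Ideal.mem_map_of_mem Ψ hx
  rw [Ideal.map_span, Set.image_image] at hΨ
  simp only [Ψ_toWords] at hΨ
  exact mem_of_ι_mem_ideal_span J hΨ

theorem toWords_injective (F X : Type*) [Field F] : Function.Injective (toWords F X) := by
  refine (injective_iff_map_eq_zero _).2 fun x hx => ?_
  exact mem_of_toWords_mem_ideal_span ⊥ (by rw [hx]; exact zero_mem _)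

theorem lift_injective {h : Y → WordAlgebra F X} (hli : LinearIndependent (WordAlgebra F X) h)
    (hh : ∀ y, constantCoeff (h y) = 0) : Function.Injective (FreeLieAlgebra.lift F h) := by
  have lift_eq : ⇑(FreeLieAlgebra.lift F h) = wordLift F h ∘ toWords F Y :=
    funext fun x => (wordLift_toWords h x).symm
  rw [lift_eq]
  exact (wordLift_injective hli hh).comp (toWords_injective F Y)

theorem mem_of_mem_ideal_span_of_le_range_toWords {K : LieSubalgebra F (WordAlgebra F X)}
    (hK : K ≤ (toWords F X).range) {a : WordAlgebra F X} (ha : a ∈ (toWords F X).range)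
    (haK : a ∈ Ideal.span (K : Set (WordAlgebra F X))) : a ∈ K := by
  obtain ⟨x, rfl⟩ := ha
  refine mem_of_toWords_mem_ideal_span (K.comap (toWords F X)) ?_
  have image_eq : toWords F X '' (K.comap (toWords F X) : Set (FreeLieAlgebra F X)) = K :=
    Set.image_preimage_eq_of_subset hK
  rwa [image_eq]

end ToWords

theorem exists_linearIndepOn_mkQ_of_forall {F : Type*} {V : Type w} [Field F]
    [AddCommGroup V] [Module F V] (M I : ℕ → Submodule F V) :
    ∃ (Y : Type w) (d : Y → ℕ) (h : Y → V), (∀ y, h y ∈ M (d y)) ∧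
      (∀ n, M n ≤ Submodule.span F (h '' {y | d y = n}) ⊔ I n) ∧
        ∀ n, LinearIndepOn F (fun y => (I n).mkQ (h y)) {y | d y = n} := by
  choose Y h _ span_eq hli using fun n =>
    exists_linearIndependent' F fun m : M n => (I n).mkQ (m : V)
  have setOf_eq (n : ℕ) : {y : Σ n, Y n | y.1 = n} = Set.range (Sigma.mk n) := by
    ext ⟨m, y⟩
    aesop
  refine ⟨Σ n, Y n, Sigma.fst, fun y => h y.1 y.2, fun y => SetLike.coe_mem _, fun n m hm => ?_,
    fun n => ?_⟩
  · have mkQ_mem : (I n).mkQ m ∈ Submodule.span F (Set.range fun y => (I n).mkQ (h n y : V)) :=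
      (span_eq n).ge (Submodule.subset_span ⟨⟨m, hm⟩, rfl⟩)
    rw [setOf_eq, ← Set.range_comp, sup_comm, ← Submodule.comap_map_mkQ, Submodule.mem_comap,
      Submodule.map_span, ← Set.range_comp]
    exact mkQ_mem
  · rw [setOf_eq, linearIndepOn_range_iff sigma_mk_injective]
    exact hli n

section Schreier

variable {F : Type u} {X : Type v} [Field F] {K K' : LieSubalgebra F (WordAlgebra F X)}

theorem leadingForms_le_range_toWords (hK : K ≤ (toWords F X).range) (n : ℕ) :
    leadingForms (wordGrading F X) K.toSubmodule n ≤ (toWords F X).range.toSubmodule := by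
  rintro _ ⟨a, ⟨haK, -⟩, rfl⟩
  exact proj_mem_range_toWords (hK haK) n

theorem leadingSubalgebra_le_range_toWords (hK : K ≤ (toWords F X).range) :
    leadingSubalgebra (wordGrading F X) K ≤ (toWords F X).range := fun _ ha =>
  mem_of_forall_proj_mem (wordGrading F X) (M := (toWords F X).range.toSubmodule) fun n =>
    leadingForms_le_range_toWords hK n (mem_lieSubalgebraOfComponents.1 ha n)

theorem le_of_leadingForms_le_sup_lowerLeadingIdeal (hK : K ≤ (toWords F X).range) (hK' : K' ≤ K)
    (h : ∀ n, leadingForms (wordGrading F X) K.toSubmodule n ≤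
      leadingForms (wordGrading F X) K'.toSubmodule n ⊔
        (lowerLeadingIdeal (wordGrading F X) K.toSubmodule n).restrictScalars F) :
    K ≤ K' := by
  refine le_of_leadingForms_le (𝒜 := wordGrading F X) hK' fun n => ?_
  induction n using Nat.strong_induction_on with
  | _ n ih =>
    intro a ha
    obtain ⟨b, hb, c, hc, rfl⟩ := Submodule.mem_sup.1 (h n ha)
    have c_mem_leadingForms : c ∈ leadingForms (wordGrading F X) K.toSubmodule n :=
      (Submodule.add_mem_iff_right _ (leadingForms_mono hK' n hb)).1 ha
    have lowerLeadingIdeal_le : lowerLeadingIdeal (wordGrading F X) K.toSubmodule n ≤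
        Ideal.span (leadingSubalgebra (wordGrading F X) K' : Set (WordAlgebra F X)) := by
      refine Ideal.span_mono ?_
      rintro e ⟨m, hm, he⟩
      exact mem_lieSubalgebraOfComponents_of_mem (leadingForms_le _ m he) (ih m hm he)
    have c_mem : c ∈ leadingSubalgebra (wordGrading F X) K' :=
      mem_of_mem_ideal_span_of_le_range_toWords (leadingSubalgebra_le_range_toWords (hK'.trans hK))
        (leadingForms_le_range_toWords hK n c_mem_leadingForms) (lowerLeadingIdeal_le hc)
    refine add_mem hb ?_
    rw [← proj_of_mem (leadingForms_le _ n c_mem_leadingForms)]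
    exact mem_lieSubalgebraOfComponents.1 c_mem n

theorem exists_lift_injective_range_eq (hK : K ≤ (toWords F X).range) :
    ∃ (Y : Type max u v) (h : Y → WordAlgebra F X),
      Function.Injective (FreeLieAlgebra.lift F h) ∧ (FreeLieAlgebra.lift F h).range = K := by
  obtain ⟨Y, d, f, hf, hspan, hli⟩ := exists_linearIndepOn_mkQ_of_forall
    (leadingForms (wordGrading F X) K.toSubmodule)
    fun n => (lowerLeadingIdeal (wordGrading F X) K.toSubmodule n).restrictScalars F
  have f_independent : LinearIndependent (WordAlgebra F X) f :=
    linearIndependent_of_linearIndepOn_mkQ (I := lowerLeadingIdeal _ K.toSubmodule)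
      (fun y => leadingForms_le K.toSubmodule _ (hf y))
      (fun y n hn => Ideal.subset_span ⟨d y, hn, hf y⟩) hli
  choose h hhK hhf using hf
  have h_independent : LinearIndependent (WordAlgebra F X) h :=
    linearIndependent_of_proj (𝒜 := wordGrading F X) (fun y => (hhK y).2)
      (by simpa only [hhf] using f_independent)
  have range_le : (FreeLieAlgebra.lift F h).range ≤ K := range_lift_le fun y => (hhK y).1
  refine ⟨Y, h, lift_injective h_independent fun y =>
    constantCoeff_eq_zero_of_mem_range_toWords (hK (hhK y).1), range_le.antisymm ?_⟩
  refine le_of_leadingForms_le_sup_lowerLeadingIdeal hK range_le fun n =>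
    (hspan n).trans (sup_le_sup_right (Submodule.span_le.2 ?_) _)
  rintro _ ⟨y, rfl, rfl⟩
  exact ⟨h y, ⟨⟨FreeLieAlgebra.of F y, FreeLieAlgebra.lift_of_apply h y⟩, (hhK y).2⟩, hhf y⟩

theorem exists_lift_bijective (J : LieSubalgebra F (FreeLieAlgebra F X)) :
    ∃ (Y : Type max u v) (g : Y → J), Function.Bijective (FreeLieAlgebra.lift F g) := by
  let embed := (toWords F X).comp J.incl
  have embed_injective : Function.Injective embed :=
    (toWords_injective F X).comp Subtype.val_injective
  have range_embed_le : embed.range ≤ (toWords F X).range := by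
    rintro _ ⟨x, rfl⟩
    exact ⟨x, rfl⟩
  obtain ⟨Y, h, lift_h_injective, range_eq⟩ := exists_lift_injective_range_eq range_embed_le
  choose g embed_g using fun y => range_eq.le
    ⟨FreeLieAlgebra.of F y, FreeLieAlgebra.lift_of_apply h y⟩
  have embed_lift (z : FreeLieAlgebra F Y) :
      embed (FreeLieAlgebra.lift F g z) = FreeLieAlgebra.lift F h z := by
    have comp_eq : embed.comp (FreeLieAlgebra.lift F g) = FreeLieAlgebra.lift F h :=
      FreeLieAlgebra.hom_ext fun y => by
        rw [LieHom.comp_apply, FreeLieAlgebra.lift_of_apply, FreeLieAlgebra.lift_of_apply]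
        exact embed_g y
    exact LieHom.congr_fun comp_eq z
  refine ⟨Y, g, fun z z' hz => ?_, fun x => ?_⟩
  · exact lift_h_injective (by rw [← embed_lift, hz, embed_lift])
  · obtain ⟨z, hz⟩ := range_eq.ge ⟨x, rfl⟩
    exact ⟨z, embed_injective ((embed_lift z).trans hz)⟩

end Schreier

end FreeLieSubalgebra

/-- **The Schreier property for free Lie algebras.**
Over a field `F`, every Lie subalgebra `J` of the free Lie algebra on a set `X` is itself a
free Lie algebra: there is a set `Y` and an isomorphism of Lie algebras
`FreeLie_F(Y) ≃ J`. -/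
theorem stmt_6.{u, v} (F : Type u) [Field F] (X : Type v)
    (J : LieSubalgebra F (FreeLieAlgebra F X)) :
    ∃ (Y : Type (max u v)) (_e : FreeLieAlgebra F Y ≃ₗ⁅F⁆ J), True := by
  obtain ⟨Y, g, hg⟩ := FreeLieSubalgebra.exists_lift_bijective J
  exact ⟨Y, LieEquiv.ofBijective _ hg, trivial⟩
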